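/- (Potential walls for one-dimensional objects, case B.) Assume κ := k + Σ_i ξ_i > 0 (so that ch₁·H_λ > 0 for all sufficiently small λ > 0). Define D := χ/r + (Δ_L·Δ_L)/2 − ( z + Δ·Δ_L + (a_L + Σ_i η_i)(p − (e/2)k + Σ_i ξ_i(θ_i + e/2)) )·(a_L + Σ_i η_i)/κ. Then there exists λ₀ ∈ (0,1) such that for each λ ∈ (0,λ₀) there is a unique real number Q(λ) with (λ, Q(λ)) on the potential wall W(e^L ch, e^L ch'), and 2λ·Q(λ) → D as λ → 0⁺. In particular, if D ≠ 0 the wall is asymptotic to q = D/(2λ) as λ → 0⁺, and if D = 0 then Q(λ) remains bounded as λ → 0⁺. -/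

import Mathlib

open Set Filter

open AffineMap (lineMap)
open scoped Topology

/-!
The wall equation is affine in `q`, with solution `q = F(λ) / (H_λ·H_λ)`, where
`F(λ) = χ/r + L²/2 - (z + L·ch₁)(L·H_λ)/(ch₁·H_λ)`. Since `H_0 = f` is isotropic and
`f·(Θ + mf) = 1`, the denominator vanishes to first order, `H_λ² = 2λ + O(λ²)`, while `F` is
differentiable at `0`. Hence `2λQ(λ) → F(0)`, and if `F(0) = 0` then `Q(λ)` converges. The constant
`F(0)` is computed by splitting `L` and `ch₁` along the plane spanned by `Θ` and `f` and its
orthogonal complement; there the fibre coefficient of `L` cancels, so that `F(0) = D`.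
-/

theorem tendsto_div_nhdsNE_of_hasDerivAt {𝕜 : Type*} [NontriviallyNormedField 𝕜] {F G : 𝕜 → 𝕜}
    {F' G' a : 𝕜} (hF : HasDerivAt F F' a) (hG : HasDerivAt G G' a) (hFa : F a = 0) (hGa : G a = 0)
    (hG' : G' ≠ 0) : Tendsto (fun x => F x / G x) (𝓝[≠] a) (𝓝 (F' / G')) := by
  refine (hF.tendsto_slope.div hG.tendsto_slope hG').congr' ?_
  filter_upwards [self_mem_nhdsWithin] with x hx
  rw [Pi.div_apply, slope_def_field, slope_def_field, hFa, hGa, sub_zero, sub_zero,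
    div_div_div_cancel_right₀ (sub_ne_zero.mpr hx)]

theorem exists_mem_Ioo_forall_of_eventually_nhdsGT {α : Type*} [TopologicalSpace α] [LinearOrder α]
    [OrderTopology α] [DenselyOrdered α] {a b : α} (hab : a < b) {P : α → Prop}
    (hP : ∀ᶠ x in 𝓝[>] a, P x) : ∃ c ∈ Ioo a b, ∀ x ∈ Ioo a c, P x := by
  obtain ⟨d, had, hdb⟩ := exists_between hab
  obtain ⟨c, hc, hcP⟩ := (mem_nhdsGT_iff_exists_mem_Ioc_Ioo_subset had).mp hP
  exact ⟨c, ⟨hc.1, hc.2.trans_lt hdb⟩, hcP⟩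

section Wall

variable {N : Type*} [AddCommGroup N] [Module ℝ N] (B : N →ₗ[ℝ] N →ₗ[ℝ] ℝ)

/-- The product `e^L ch` of a Chern character `ch = (ch₀, ch₁, ch₂)` with the exponential of the
divisor class `L`. -/
noncomputable def expTwist (L : N) (ch : ℝ × N × ℝ) : ℝ × N × ℝ :=
  (ch.1, ch.2.1 + ch.1 • L, ch.2.2 + B L ch.2.1 + ch.1 / 2 * B L L)

/-- The central charge of a Chern character `(ch₀, ch₁, ch₂)` at polarization `H`, parameter `q` and
trivial B-field. -/
def centralCharge (H : N) (q : ℝ) (ch : ℝ × N × ℝ) : ℂ :=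
  ⟨-ch.2.2 + ch.1 * B H H * q, B ch.2.1 H⟩

/-- The point `(H, q)` lies on the potential wall of `a` and `b`: their central charges there are
linearly dependent over the reals. -/
def OnPotentialWall (H : N) (q : ℝ) (a b : ℝ × N × ℝ) : Prop :=
  (centralCharge B H q a).re * (centralCharge B H q b).im =
    (centralCharge B H q b).re * (centralCharge B H q a).im

/-- For the characters `e^L (0, c, z)` and `e^L (r, 0, χ)` with `s = χ / r`, the value of
`q * B H H` on their potential wall. It is meaningful also at an isotropic `H`, as long as
`B c H ≠ 0`. -/
noncomputable def wallNumerator (L c : N) (z s : ℝ) (H : N) : ℝ :=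
  s + B L L / 2 - (z + B L c) * B L H / B c H

/-- The coordinate `q` at which the potential wall of `e^L (0, c, z)` and `e^L (r, 0, χ)`, with
`s = χ / r`, meets the vertical line over the polarization `H`. It is a junk value unless both
`B c H` and `B H H` are nonzero. -/
noncomputable def wallHeight (L c : N) (z s : ℝ) (H : N) : ℝ :=
  wallNumerator B L c z s H / B H H

variable {B}

theorem onPotentialWall_expTwist_iff_eq_wallHeight {L c H : N} {r z χ q : ℝ} (hr : r ≠ 0)
    (hcH : B c H ≠ 0) (hHH : B H H ≠ 0) :
    OnPotentialWall B H q (expTwist B L (0, c, z)) (expTwist B L (r, 0, χ)) ↔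
      q = wallHeight B L c z (χ / r) H := by
  simp only [OnPotentialWall, centralCharge, expTwist, wallHeight, wallNumerator, map_add, map_smul,
    LinearMap.add_apply, LinearMap.smul_apply, map_zero, LinearMap.zero_apply, smul_eq_mul]
  field_simp
  constructor <;> intro h <;> linear_combination -h

variable (B) in
theorem hasDerivAt_apply_lineMap (f E x : N) (t : ℝ) :
    HasDerivAt (fun l => B x (lineMap f E l)) (B x E - B x f) t := by
  have hline : (fun l => B x (lineMap f E l)) = lineMap (B x f) (B x E) :=
    funext fun l => (B x).toAffineMap.apply_lineMap f E l
  exact hline ▸ AffineMap.hasDerivAt_lineMap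

variable {f E c : N}

theorem hasDerivAt_apply_self_lineMap (hB : B.IsSymm) (hff : B f f = 0) :
    HasDerivAt (fun l : ℝ => B (lineMap f E l) (lineMap f E l))
      (2 * B f E) 0 := by
  have expand (l : ℝ) : B (lineMap f E l) (lineMap f E l) =
      2 * B f E * (l * (1 - l)) + B E E * l ^ 2 := by
    have hEf : B E f = B f E := hB.eq E f
    simp only [AffineMap.lineMap_apply_module, map_add, map_smul, LinearMap.add_apply,
      LinearMap.smul_apply, smul_eq_mul, hff, hEf]
    ring
  simp only [expand]
  have hid := hasDerivAt_id' (0 : ℝ)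
  exact (((hid.fun_mul (hid.const_sub 1)).const_mul (2 * B f E)).fun_add
    ((hid.fun_pow 2).const_mul (B E E))).congr_deriv (by simp)

theorem differentiableAt_wallNumerator_lineMap (L : N) (z s : ℝ) (hcf : B c f ≠ 0) :
    DifferentiableAt ℝ (fun l : ℝ => wallNumerator B L c z s (lineMap f E l)) 0 := by
  have hL := (hasDerivAt_apply_lineMap B f E L 0).differentiableAt
  have hc := (hasDerivAt_apply_lineMap B f E c 0).differentiableAt
  exact (differentiableAt_const _).sub ((hL.const_mul _).div hc (by simpa using hcf))

theorem tendsto_two_mul_wallHeight_lineMap (hB : B.IsSymm) (hff : B f f = 0) (hfE : B f E ≠ 0)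
    (hcf : B c f ≠ 0) (L : N) (z s : ℝ) :
    Tendsto (fun l : ℝ => 2 * l * wallHeight B L c z s (lineMap f E l)) (𝓝[≠] 0)
      (𝓝 (wallNumerator B L c z s f / B f E)) := by
  have hnum := ((hasDerivAt_id (0 : ℝ)).const_mul 2).mul
    (differentiableAt_wallNumerator_lineMap (E := E) L z s hcf).hasDerivAt
  have hlim := tendsto_div_nhdsNE_of_hasDerivAt hnum (hasDerivAt_apply_self_lineMap hB hff)
    (by simp) (by simpa using hff) (mul_ne_zero two_ne_zero hfE)
  convert hlim using 2
  · simp [wallHeight, mul_div_assoc]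
  · simp [mul_div_mul_left]

theorem exists_tendsto_wallHeight_lineMap (hB : B.IsSymm) (hff : B f f = 0) (hfE : B f E ≠ 0)
    (hcf : B c f ≠ 0) {L : N} {z s : ℝ} (hzero : wallNumerator B L c z s f = 0) :
    ∃ q, Tendsto (fun l : ℝ => wallHeight B L c z s (lineMap f E l)) (𝓝[≠] 0) (𝓝 q) :=
  ⟨_, tendsto_div_nhdsNE_of_hasDerivAt
    (differentiableAt_wallNumerator_lineMap L z s hcf).hasDerivAt
    (hasDerivAt_apply_self_lineMap hB hff) (by simpa using hzero) (by simpa using hff)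
    (mul_ne_zero two_ne_zero hfE)⟩

theorem eventually_mul_apply_lineMap_pos (hcf : B c f ≠ 0) :
    ∀ᶠ l : ℝ in 𝓝 0, 0 < B c f * B c (lineMap f E l) := by
  have hcont := (hasDerivAt_apply_lineMap B f E c 0).continuousAt
  refine (hcont.const_mul (B c f)).eventually_const_lt ?_
  simpa using mul_self_pos.mpr hcf

theorem eventually_onPotentialWall_lineMap_iff (hB : B.IsSymm) (hff : B f f = 0) (hfE : B f E ≠ 0)
    (hcf : B c f ≠ 0) (L : N) {r : ℝ} (hr : r ≠ 0) (z χ : ℝ) :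
    ∀ᶠ l : ℝ in 𝓝[≠] 0, ∀ q : ℝ,
      OnPotentialWall B (lineMap f E l) q
          (expTwist B L (0, c, z)) (expTwist B L (r, 0, χ)) ↔
        q = wallHeight B L c z (χ / r) (lineMap f E l) := by
  have hpos := nhdsWithin_le_nhds (s := {0}ᶜ) (eventually_mul_apply_lineMap_pos (E := E) hcf)
  have hne := (hasDerivAt_apply_self_lineMap hB hff).eventually_ne (c := 0)
    (mul_ne_zero two_ne_zero hfE)
  filter_upwards [hpos, hne] with l hcl hll q
  exact onPotentialWall_expTwist_iff_eq_wallHeight hr (right_ne_zero_of_mul hcl.ne') hll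

theorem exists_eventually_abs_wallHeight_lineMap_le (hB : B.IsSymm) (hff : B f f = 0)
    (hfE : B f E ≠ 0) (hcf : B c f ≠ 0) (L : N) (z s : ℝ) :
    ∃ M, ∀ᶠ l : ℝ in 𝓝[≠] 0, wallNumerator B L c z s f = 0 →
      |wallHeight B L c z s (lineMap f E l)| ≤ M := by
  by_cases hzero : wallNumerator B L c z s f = 0
  · obtain ⟨q, hq⟩ := exists_tendsto_wallHeight_lineMap hB hff hfE hcf hzero
    exact ⟨|q| + 1, (hq.abs.eventually_le_const (lt_add_one _)).mono fun _ hl _ => hl⟩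
  · exact ⟨0, .of_forall fun _ h => absurd h hzero⟩

theorem exists_forall_mem_Ioo_onPotentialWall_lineMap (hB : B.IsSymm) (hff : B f f = 0)
    (hfE : B f E ≠ 0) (hcf : B c f ≠ 0) (L : N) {r : ℝ} (hr : r ≠ 0) (z χ : ℝ) :
    ∃ l₀ ∈ Ioo (0 : ℝ) 1,
      (∀ l ∈ Ioo (0 : ℝ) l₀, ∀ q, OnPotentialWall B (lineMap f E l) q
          (expTwist B L (0, c, z)) (expTwist B L (r, 0, χ)) ↔
        q = wallHeight B L c z (χ / r) (lineMap f E l)) ∧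
      Tendsto (fun l => 2 * l * wallHeight B L c z (χ / r) (lineMap f E l))
        (𝓝[Ioo 0 l₀] 0) (𝓝 (wallNumerator B L c z (χ / r) f / B f E)) ∧
      (wallNumerator B L c z (χ / r) f = 0 → ∃ M, ∀ l ∈ Ioo (0 : ℝ) l₀,
        |wallHeight B L c z (χ / r) (lineMap f E l)| ≤ M) := by
  obtain ⟨M, hM⟩ :=
    exists_eventually_abs_wallHeight_lineMap_le (E := E) hB hff hfE hcf L z (χ / r)
  obtain ⟨l₀, hl₀, hwall⟩ := exists_mem_Ioo_forall_of_eventually_nhdsGT one_pos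
    (nhdsGT_le_nhdsNE 0 ((eventually_onPotentialWall_lineMap_iff hB hff hfE hcf L hr z χ).and hM))
  refine ⟨l₀, hl₀, fun l hl => (hwall l hl).1, ?_, fun hzero => ⟨M, fun l hl => ?_⟩⟩
  · exact (tendsto_two_mul_wallHeight_lineMap hB hff hfE hcf L z (χ / r)).mono_left
      ((nhdsWithin_mono _ Ioo_subset_Ioi_self).trans (nhdsGT_le_nhdsNE 0))
  · exact (hwall l hl).2 hzero

end Wall

section Weierstrass

variable {N : Type*} [AddCommGroup N] [Module ℝ N] {B : N →ₗ[ℝ] N →ₗ[ℝ] ℝ} {Θ f : N}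

variable (B Θ f) in
/-- The class `Δ` attached to a class `S` of fibre degree `B S f = 1`: the component of `S`
orthogonal to the plane spanned by `Θ` and `f`, provided `B Θ f = 1` and `B f f = 0`. The
self-intersection `B Θ Θ` plays the role of `-e`. -/
def orthogonalPart (S : N) : N :=
  S - Θ - (B Θ S - B Θ Θ) • f

theorem orthogonalPart_apply_fibre {S : N} (hff : B f f = 0) (hΘf : B Θ f = 1) (hSf : B S f = 1) :
    B (orthogonalPart B Θ f S) f = 0 := by
  simp [orthogonalPart, hff, hΘf, hSf]

theorem orthogonalPart_apply_section (hB : B.IsSymm) (hΘf : B Θ f = 1) (S : N) :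
    B (orthogonalPart B Θ f S) Θ = 0 := by
  have hfΘ : B f Θ = 1 := (hB.eq f Θ).trans hΘf
  have hSΘ : B S Θ = B Θ S := hB.eq S Θ
  simp [orthogonalPart, hfΘ, hSΘ]

variable (B Θ f) in
theorem add_sum_smul_eq_add_sum_smul_orthogonalPart {ι : Type*} [Fintype ι] (a b : ℝ) (c : ι → ℝ)
    (S : ι → N) :
    a • Θ + b • f + ∑ i, c i • S i =
      (a + ∑ i, c i) • Θ + (b + ∑ i, c i * (B Θ (S i) - B Θ Θ)) • f +
        ∑ i, c i • orthogonalPart B Θ f (S i) := by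
  simp only [orthogonalPart, smul_sub, Finset.sum_sub_distrib, add_smul, Finset.sum_smul, mul_smul]
  abel

theorem wallNumerator_fibre_of_orthogonal (hB : B.IsSymm) (hff : B f f = 0) (hΘf : B Θ f = 1)
    {Δ ΔL : N} (hΔΘ : B Δ Θ = 0) (hΔf : B Δ f = 0) (hΔLΘ : B ΔL Θ = 0) (hΔLf : B ΔL f = 0)
    {κ : ℝ} (hκ : κ ≠ 0) (α β ρ z s : ℝ) :
    wallNumerator B (α • Θ + β • f + ΔL) (κ • Θ + ρ • f + Δ) z s f =
      s + B ΔL ΔL / 2 - (z + B Δ ΔL + α * (ρ + B Θ Θ / 2 * κ)) * α / κ := by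
  have hfΘ : B f Θ = 1 := (hB.eq f Θ).trans hΘf
  have hΘΔ : B Θ Δ = 0 := (hB.eq Θ Δ).trans hΔΘ
  have hfΔ : B f Δ = 0 := (hB.eq f Δ).trans hΔf
  have hΘΔL : B Θ ΔL = 0 := (hB.eq Θ ΔL).trans hΔLΘ
  have hfΔL : B f ΔL = 0 := (hB.eq f ΔL).trans hΔLf
  have hΔLΔ : B ΔL Δ = B Δ ΔL := hB.eq ΔL Δ
  simp only [wallNumerator, map_add, map_smul, LinearMap.add_apply, LinearMap.smul_apply,
    smul_eq_mul, hff, hΘf, hfΘ, hΔf, hΔLΘ, hΔLf, hΘΔ, hfΔ, hΘΔL, hfΔL, hΔLΔ, mul_one, mul_zero,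
    add_zero, zero_add]
  field_simp
  ring

theorem wallNumerator_fibre_add_sum_smul {ι : Type*} [Fintype ι] {S : ι → N} (hB : B.IsSymm)
    (hff : B f f = 0) (hΘf : B Θ f = 1) (hSf : ∀ i, B (S i) f = 1) (a b k p z s : ℝ)
    (ξ η : ι → ℝ) (hκ : k + ∑ i, ξ i ≠ 0) :
    wallNumerator B (a • Θ + b • f + ∑ i, η i • S i) (k • Θ + p • f + ∑ i, ξ i • S i) z s f =
      s + B (∑ i, η i • orthogonalPart B Θ f (S i)) (∑ i, η i • orthogonalPart B Θ f (S i)) / 2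
        - (z + B (∑ i, ξ i • orthogonalPart B Θ f (S i)) (∑ i, η i • orthogonalPart B Θ f (S i))
            + (a + ∑ i, η i) *
              (p + B Θ Θ / 2 * k + ∑ i, ξ i * (B Θ (S i) - B Θ Θ / 2)))
          * (a + ∑ i, η i) / (k + ∑ i, ξ i) := by
  have sum_apply_section (c : ι → ℝ) : B (∑ i, c i • orthogonalPart B Θ f (S i)) Θ = 0 := by
    simp [orthogonalPart_apply_section hB hΘf]
  have sum_apply_fibre (c : ι → ℝ) : B (∑ i, c i • orthogonalPart B Θ f (S i)) f = 0 := by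
    simp [orthogonalPart_apply_fibre hff hΘf (hSf _)]
  have fibre_coeff : p + B Θ Θ / 2 * k + ∑ i, ξ i * (B Θ (S i) - B Θ Θ / 2) =
      p + ∑ i, ξ i * (B Θ (S i) - B Θ Θ) + B Θ Θ / 2 * (k + ∑ i, ξ i) := by
    simp only [mul_sub, Finset.sum_sub_distrib, ← Finset.sum_mul]
    ring
  rw [add_sum_smul_eq_add_sum_smul_orthogonalPart B Θ f a,
    add_sum_smul_eq_add_sum_smul_orthogonalPart B Θ f k,
    wallNumerator_fibre_of_orthogonal hB hff hΘf (sum_apply_section ξ) (sum_apply_fibre ξ)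
      (sum_apply_section η) (sum_apply_fibre η) hκ, fibre_coeff]

end Weierstrass

theorem potential_wall_asymptotics_dim_one_caseB_general
    {ι : Type*} [Fintype ι] {N : Type*} [AddCommGroup N] [Module ℝ N]
    (B : N →ₗ[ℝ] N →ₗ[ℝ] ℝ) (hsymm : ∀ D D' : N, B D D' = B D' D)
    (e m : ℝ) (Θ f : N) (Θi : ι → N)
    (hΘΘ : B Θ Θ = -e)
    (hff : B f f = 0) (hΘf : B Θ f = 1) (hΘif : ∀ i, B (Θi i) f = 1)
    (θ : ι → ℝ) (hθ : ∀ i, θ i = B Θ (Θi i))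
    (Hl : ℝ → N) (hHl : ∀ l : ℝ, Hl l = l • (Θ + m • f) + (1 - l) • f)
    (g : ℝ → ℝ) (hg : ∀ l : ℝ, g l = B (Hl l) (Hl l))
    (z r k p χ aL bL : ℝ) (ξ η : ι → ℝ)
    (hr : r ≠ 0)
    (κ : ℝ) (hκ : κ = k + ∑ i, ξ i) (hκ0 : κ ≠ 0)
    (Δi : ι → N) (hΔi : ∀ i, Δi i = Θi i - Θ - (θ i + e) • f)
    (ΔL Δ : N) (hΔL : ΔL = ∑ i, η i • Δi i) (hΔ : Δ = ∑ i, ξ i • Δi i)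
    (L ch1 : N)
    (hL : L = aL • Θ + bL • f + ∑ i, η i • Θi i)
    (hch1 : ch1 = k • Θ + p • f + ∑ i, ξ i • Θi i)
    (D : ℝ)
    (hD : D = χ / r + B ΔL ΔL / 2
        - (z + B Δ ΔL
            + (aL + ∑ i, η i) * (p - e / 2 * k + ∑ i, ξ i * (θ i + e / 2)))
          * (aL + ∑ i, η i) / κ)
    (onWall : ℝ → ℝ → Prop)
    (honWall : ∀ l q : ℝ, onWall l q ↔
      (-(z + B L ch1) + 0 * g l * q) * B ((0 : N) + r • L) (Hl l)
        = (-(χ + B L (0 : N) + r / 2 * B L L) + r * g l * q)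
          * B ch1 (Hl l)) :
    (∃ l₁ ∈ Ioo (0 : ℝ) 1, ∀ l ∈ Ioo (0 : ℝ) l₁, 0 < κ * B ch1 (Hl l)) ∧
    ∃ l₀ ∈ Ioo (0 : ℝ) 1, ∃ Q : ℝ → ℝ,
      (∀ l ∈ Ioo (0 : ℝ) l₀, onWall l (Q l) ∧ ∀ q : ℝ, onWall l q → q = Q l) ∧
      Tendsto (fun l => 2 * l * Q l) (nhdsWithin 0 (Ioo (0 : ℝ) l₀))
        (nhds D) ∧
      (D = 0 → ∃ M : ℝ, ∀ l ∈ Ioo (0 : ℝ) l₀, |Q l| ≤ M) := by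
  have hB : B.IsSymm := ⟨hsymm⟩
  have hH (l : ℝ) : Hl l = lineMap f (Θ + m • f) l := by
    rw [hHl, AffineMap.lineMap_apply_module, add_comm]
  have hfE : B f (Θ + m • f) = 1 := by simp [hff, hsymm f Θ, hΘf]
  have hcf : B ch1 f = κ := by simp [hch1, hκ, hff, hΘf, hΘif]
  have hcf0 : B ch1 f ≠ 0 := hcf ▸ hκ0
  have hDnum : D = wallNumerator B L ch1 z (χ / r) f := by
    have hΔorth (i : ι) : Δi i = orthogonalPart B Θ f (Θi i) := by
      rw [hΔi, orthogonalPart, hθ, hΘΘ, sub_neg_eq_add]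
    rw [hD, hL, hch1, wallNumerator_fibre_add_sum_smul hB hff hΘf hΘif _ _ _ _ _ _ _ _
      (hκ ▸ hκ0)]
    simp only [hΔL, hΔ, hΔorth, hκ, hθ, hΘΘ, neg_div, neg_mul, sub_neg_eq_add, ← sub_eq_add_neg]
  have hwall (l q : ℝ) : onWall l q ↔ OnPotentialWall B (lineMap f (Θ + m • f) l) q
      (expTwist B L (0, ch1, z)) (expTwist B L (r, 0, χ)) := by
    simp [honWall, hg, hH, OnPotentialWall, centralCharge, expTwist]
  obtain ⟨l₀, hl₀, hiff, hlim, hbdd⟩ := exists_forall_mem_Ioo_onPotentialWall_lineMap hB hff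
    (hfE ▸ one_ne_zero) hcf0 L hr z χ
  rw [hfE, div_one, ← hDnum] at hlim
  refine ⟨?_, l₀, hl₀, _, fun l hl => ?_, hlim, hDnum ▸ hbdd⟩
  · simpa only [hH, hcf] using exists_mem_Ioo_forall_of_eventually_nhdsGT one_pos
      (nhdsWithin_le_nhds (eventually_mul_apply_lineMap_pos (E := Θ + m • f) hcf0))
  · simp only [hwall, hiff l hl, true_and, imp_self, implies_true]

/-- Potential walls in the `(λ,0,0,q)`-plane for one-dimensional objects,
case (B): `ch = (0, kΘ + pf + Σᵢ ξᵢΘᵢ, z)` with `κ = k + Σᵢ ξᵢ > 0`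
(so `ch₁·H_λ > 0` for all sufficiently small `λ > 0`), `ch' = (r, 0, χ)` with
`r ≠ 0`. For small `λ > 0` the potential wall `W(e^L ch, e^L ch')` meets each
vertical line in a unique point `(λ, Q(λ))`, and `2λQ(λ) → D`; in particular
if `D ≠ 0` the wall is asymptotic to `q = D/(2λ)` and if `D = 0` then `Q(λ)`
remains bounded as `λ → 0⁺`. -/
theorem potential_wall_asymptotics_dim_one_caseB
    {ι : Type*} [Fintype ι] {N : Type*} [AddCommGroup N] [Module ℝ N]
    (B : N →ₗ[ℝ] N →ₗ[ℝ] ℝ) (hsymm : ∀ D D' : N, B D D' = B D' D)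
    (e m : ℝ) (Θ f : N) (Θi : ι → N)
    (hΘΘ : B Θ Θ = -e) (hΘiΘi : ∀ i, B (Θi i) (Θi i) = -e)
    (hff : B f f = 0) (hΘf : B Θ f = 1) (hΘif : ∀ i, B (Θi i) f = 1)
    (θ : ι → ℝ) (hθ : ∀ i, θ i = B Θ (Θi i))
    (Hl : ℝ → N) (hHl : ∀ l : ℝ, Hl l = l • (Θ + m • f) + (1 - l) • f)
    (g : ℝ → ℝ) (hg : ∀ l : ℝ, g l = B (Hl l) (Hl l))
    (z r k p χ aL bL : ℝ) (ξ η : ι → ℝ)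
    (hr : r ≠ 0)
    (κ : ℝ) (hκ : κ = k + ∑ i, ξ i) (hκpos : 0 < κ)
    (Δi : ι → N) (hΔi : ∀ i, Δi i = Θi i - Θ - (θ i + e) • f)
    (ΔL Δ : N) (hΔL : ΔL = ∑ i, η i • Δi i) (hΔ : Δ = ∑ i, ξ i • Δi i)
    (L ch1 : N)
    (hL : L = aL • Θ + bL • f + ∑ i, η i • Θi i)
    (hch1 : ch1 = k • Θ + p • f + ∑ i, ξ i • Θi i)
    (D : ℝ)
    (hD : D = χ / r + B ΔL ΔL / 2
        - (z + B Δ ΔL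
            + (aL + ∑ i, η i) * (p - e / 2 * k + ∑ i, ξ i * (θ i + e / 2)))
          * (aL + ∑ i, η i) / κ)
    (onWall : ℝ → ℝ → Prop)
    (honWall : ∀ l q : ℝ, onWall l q ↔
      (-(z + B L ch1) + 0 * g l * q) * B ((0 : N) + r • L) (Hl l)
        = (-(χ + B L (0 : N) + r / 2 * B L L) + r * g l * q)
          * B ch1 (Hl l)) :
    (∃ l₁ ∈ Ioo (0 : ℝ) 1, ∀ l ∈ Ioo (0 : ℝ) l₁, 0 < B ch1 (Hl l)) ∧
    ∃ l₀ ∈ Ioo (0 : ℝ) 1, ∃ Q : ℝ → ℝ,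
      (∀ l ∈ Ioo (0 : ℝ) l₀, onWall l (Q l) ∧ ∀ q : ℝ, onWall l q → q = Q l) ∧
      Tendsto (fun l => 2 * l * Q l) (nhdsWithin 0 (Ioo (0 : ℝ) l₀))
        (nhds D) ∧
      (D = 0 → ∃ M : ℝ, ∀ l ∈ Ioo (0 : ℝ) l₀, |Q l| ≤ M) := by
  obtain ⟨⟨l₁, hl₁, hpos⟩, hwall⟩ := potential_wall_asymptotics_dim_one_caseB_general B hsymm e m Θ
    f Θi hΘΘ hff hΘf hΘif θ hθ Hl hHl g hg z r k p χ aL bL ξ η hr κ hκ hκpos.ne' Δi hΔi ΔL Δ hΔL hΔ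
    L ch1 hL hch1 D hD onWall honWall
  exact ⟨⟨l₁, hl₁, fun l hl => (pos_iff_pos_of_mul_pos (hpos l hl)).mp hκpos⟩, hwall⟩
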